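/- arXiv:1406.4266 — 2 statements merged into one kernel-verified Lean document; each statement's English description precedes it below -/
import Mathlib

section
/- Let T be a C² expanding map of the circle 𝕋 with inf_x |DT(x)| ≥ Λ > 1, with intervals of local injectivity A_1, …, A_m each mapped by T onto all of 𝕋, and for ε ∈ (−1,1) let T_ε(x) = T(x) + ε (mod 1); assume sup_{ε∈(−1,1)} sup_x |D²T_ε(x)/DT_ε(x)| ≤ C₁ < ∞. Let P_ε denote the transfer operator of T_ε with respect to Haar (Lebesgue) measure m, given by (P_ε f)(x) = Σ_{y : T_ε(y) = x} f(y)/|DT_ε(y)|. Then for every n ≥ 1, every choice ε_1, …, ε_n ∈ (−1,1), and every x ∈ 𝕋: (P_{ε_n}∘⋯∘P_{ε_1}) 1 (x) ≥ exp( −C₁/(Λ−1) ). In particular the family {T_ε} satisfies the uniform lower bound property (LB). -/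
open scoped BigOperators

/-- Composition of operators `P̄_n = P_n ∘ ⋯ ∘ P_1` (and `P̄_0 = id`). -/
def opComp {α : Type*} (P : ℕ → α → α) : ℕ → α → α
  | 0 => id
  | n + 1 => P (n + 1) ∘ opComp P n

/-- The derivative of a circle map, read off from a `1`-periodic-derivative lift `F` through
the canonical representative in `[0,1)`. -/
noncomputable def circleDeriv (F : ℝ → ℝ) : UnitAddCircle → ℝ := fun x =>
  letI : Fact ((0 : ℝ) < 1) := ⟨one_pos⟩
  deriv F ((AddCircle.equivIco 1 0 x : Set.Ico (0 : ℝ) (0 + 1)) : ℝ)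


lemma lb_int_deg (F : ℝ → ℝ) (d : ℤ) (hdeg : ∀ x : ℝ, F (x + 1) = F x + d) (m : ℤ) :
    ∀ x, F (x + m) = F x + m * d := by
  induction m using Int.induction_on with
  | zero => intro x; simp
  | succ i ih =>
    intro x
    have := hdeg (x + i)
    push_cast at *
    rw [← add_assoc, this, ih]; ring
  | pred i ih =>
    intro x
    have := hdeg (x + (-(i:ℝ) - 1))
    have h2 := ih x
    push_cast at *
    rw [show x + (-(i:ℝ) - 1) + 1 = x + -(i:ℝ) by ring, h2] at this
    linarith

lemma lb_coe_eq (a b : ℝ) : ((a : UnitAddCircle) = b) ↔ ∃ m : ℤ, a = b + m := by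
  rw [← sub_eq_zero, ← AddCircle.coe_sub, AddCircle.coe_eq_zero_iff]
  constructor
  · rintro ⟨n, hn⟩
    refine ⟨n, ?_⟩
    simp at hn
    linarith
  · rintro ⟨n, hn⟩
    exact ⟨n, by simp [hn]⟩

lemma lb_circleDeriv (F : ℝ → ℝ) (d : ℤ) (hdeg : ∀ x : ℝ, F (x + 1) = F x + d) (t : ℝ) :
    circleDeriv F (t : UnitAddCircle) = deriv F t := by
  let : Fact ((0 : ℝ) < 1) := ⟨one_pos⟩
  unfold circleDeriv
  have h := AddCircle.coe_equivIco (p := (1:ℝ)) (a := 0) (y := (t : UnitAddCircle))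
  obtain ⟨m, hm⟩ := (lb_coe_eq _ _).1 h
  have e : (fun x => F (x + m)) = fun x => F x + m * d := funext (lb_int_deg F d hdeg m)
  have h2 : deriv (fun x => F (x + m)) t = deriv F t := by
    rw [e, deriv_add_const]
  rw [deriv_comp_add_const] at h2
  rw [← h2, ← hm]

def LBInv (L : ℝ) (f : UnitAddCircle → ℝ) : Prop :=
  ∃ H : ℝ → ℝ, (∀ x : ℝ, HasDerivAt H (f x) x) ∧ (∀ x : ℝ, H (x + 1) = H x + 1) ∧
    (∀ x : ℝ, 0 < f x) ∧ ∀ x y : ℝ, f x ≤ Real.exp (L * |x - y|) * f y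

lemma lb_final (L : ℝ) (hL : 0 ≤ L) (f : UnitAddCircle → ℝ) (h : LBInv L f) (x : UnitAddCircle) :
    Real.exp (-L) ≤ f x := by
  letI : Fact ((0 : ℝ) < 1) := ⟨one_pos⟩
  obtain ⟨H, h1, h2, h3, h4⟩ := h
  obtain ⟨c, hc, hc'⟩ := exists_hasDerivAt_eq_slope H (fun x => f x) (zero_lt_one' ℝ)
    (fun x _ => (h1 x).continuousAt.continuousWithinAt) (fun x _ => h1 x)
  have h0 := h2 0
  rw [zero_add] at h0
  rw [h0] at hc'
  simp at hc'
  have hx := AddCircle.coe_equivIco (p := (1:ℝ)) (a := 0) (y := x)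
  have ht := (AddCircle.equivIco (1:ℝ) 0 x).2
  set t : ℝ := (AddCircle.equivIco (1:ℝ) 0 x : ℝ)
  rw [← hx]
  have h5 := h4 c t
  rw [hc'] at h5
  have h6 : |c - t| ≤ 1 := by
    rw [abs_le]; obtain ⟨a, b⟩ := ht; obtain ⟨a', b'⟩ := hc
    constructor <;> linarith
  have h7 : Real.exp (L * |c - t|) ≤ Real.exp L := Real.exp_le_exp.2 (by nlinarith)
  have h8 : 1 ≤ Real.exp L * f t := h5.trans (by gcongr; exact (h3 t).le)
  rw [Real.exp_neg, inv_le_iff_one_le_mul₀' (Real.exp_pos _)]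
  exact h8

lemma lb_dist (F : ℝ → ℝ) (hF : ContDiff ℝ 2 F)
    (Λ : ℝ) (hΛ : 1 < Λ) (hexp : ∀ x : ℝ, Λ ≤ |deriv F x|)
    (C₁ : ℝ) (hdist : ∀ x : ℝ, |deriv (deriv F) x| ≤ C₁ * |deriv F x|) (a b : ℝ) :
    |deriv F a| ≤ Real.exp (C₁ * |a - b|) * |deriv F b| := by
  have hpos : ∀ x, 0 < |deriv F x| := fun x => by linarith [hexp x]
  have hd : Differentiable ℝ (deriv F) := by
    have : ContDiff ℝ 1 (deriv F) := by
      have h2 : ContDiff ℝ (1 + 1) F := by simpa [one_add_one_eq_two] using hF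
      exact (contDiff_succ_iff_deriv.1 h2).2.2
    exact this.differentiable (by norm_num)
  have h := Convex.norm_image_sub_le_of_norm_hasDerivWithin_le (s := Set.univ)
    (f := fun x => Real.log (deriv F x)) (f' := fun x => deriv (deriv F) x / deriv F x) (C := C₁)
    (x := b) (y := a)
    (fun x _ => ((hd x).hasDerivAt.log (abs_pos.1 (hpos x))).hasDerivWithinAt)
    (fun x _ => by
      rw [norm_div, Real.norm_eq_abs, Real.norm_eq_abs, div_le_iff₀ (hpos x)]
      exact hdist x) convex_univ trivial trivial
  have h' := (le_abs_self _).trans h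
  rw [← Real.log_abs (deriv F a), ← Real.log_abs (deriv F b), Real.norm_eq_abs] at h'
  rw [← Real.exp_log (hpos a), ← Real.exp_log (hpos b), ← Real.exp_add]
  exact Real.exp_le_exp.2 (by linarith)

/-- The sign of the derivative and the inverse of the lift. -/
lemma lb_inverse (F : ℝ → ℝ) (hF : ContDiff ℝ 2 F)
    (d : ℤ) (hdeg : ∀ x : ℝ, F (x + 1) = F x + d)
    (Λ : ℝ) (hΛ : 1 < Λ) (hexp : ∀ x : ℝ, Λ ≤ |deriv F x|) :
    ∃ (s : ℤ) (N : ℕ) (G : ℝ → ℝ), s * s = 1 ∧ (N : ℤ) = s * d ∧ 0 < N ∧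
      (∀ x, |deriv F x| = s * deriv F x) ∧ (∀ x, G (F x) = x) ∧ (∀ x, F (G x) = x) ∧
      (∀ x y, |G x - G y| ≤ |x - y| / Λ) ∧
      ∀ x, HasDerivAt G (deriv F (G x))⁻¹ x := by
  have hdiff : Differentiable ℝ F := hF.differentiable (by norm_num)
  have hpos : ∀ x, 0 < |deriv F x| := fun x => by linarith [hexp x]
  obtain ⟨s, hs, hsd⟩ : ∃ s : ℤ, s * s = 1 ∧ ∀ x, |deriv F x| = s * deriv F x := by
    rcases hasDerivWithinAt_forall_lt_or_forall_gt_of_forall_ne (s := Set.univ) (f := F)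
      (f' := deriv F) (m := 0) convex_univ
      (fun x _ => (hdiff x).hasDerivAt.hasDerivWithinAt) (fun x _ => abs_pos.1 (hpos x)) with h | h
    · exact ⟨-1, by norm_num, fun x => by rw [abs_of_neg (h x trivial)]; simp⟩
    · exact ⟨1, by norm_num, fun x => by rw [abs_of_pos (h x trivial)]; simp⟩
  have hsR : (s : ℝ) * s = 1 := by exact_mod_cast hs
  have hsabs : |(s : ℝ)| = 1 := by
    have := abs_mul_abs_self (s : ℝ)
    rw [hsR] at this
    nlinarith [abs_nonneg (s : ℝ)]
  have hmono : ∀ x y, x ≤ y → Λ * (y - x) ≤ s * F y - s * F x := by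
    intro x y hxy
    have := mul_sub_le_image_sub_of_le_deriv (f := fun x => s * F x) (C := Λ)
      (hdiff.const_mul _) (fun x => by rw [deriv_const_mul _ (hdiff x), ← hsd]; exact hexp x) hxy
    exact this
  have hlip : ∀ x y, Λ * |x - y| ≤ |F x - F y| := by
    intro x y
    have e : |F x - F y| = |s * F x - s * F y| := by
      rw [← mul_sub, abs_mul, hsabs, one_mul]
    rw [e]
    rcases le_total x y with h | h
    · rw [abs_sub_comm x, abs_sub_comm (s * F x), abs_of_nonneg (sub_nonneg.2 h)]
      exact (hmono x y h).trans (le_abs_self _)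
    · rw [abs_of_nonneg (sub_nonneg.2 h)]
      exact (hmono y x h).trans (le_abs_self _)
  have hinj : Function.Injective F := by
    intro x y h
    have := hlip x y
    rw [h, sub_self, abs_zero] at this
    have : |x - y| ≤ 0 := by nlinarith [abs_nonneg (x - y)]
    exact sub_eq_zero.1 (abs_nonpos_iff.1 this)
  have hsurj : Function.Surjective F := by
    have hs2 : Function.Surjective (fun x => s * F x) := by
      apply Continuous.surjective (by have := hdiff.continuous; fun_prop)
      · refine Filter.tendsto_atTop_mono' _ (f₁ := fun x => Λ * x + s * F 0) ?_ ?_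
        · filter_upwards [Filter.eventually_ge_atTop 0] with x hx
          have := hmono 0 x hx
          linarith
        · exact Filter.tendsto_atTop_add_const_right _ _
            (Filter.tendsto_id.const_mul_atTop (by linarith))
      · refine Filter.tendsto_atBot_mono' _ (f₁ := fun x => Λ * x + s * F 0) ?_ ?_
        · filter_upwards [Filter.eventually_le_atBot 0] with x hx
          have := hmono x 0 hx
          linarith
        · exact Filter.tendsto_atBot_add_const_right _ _
            (Filter.tendsto_id.const_mul_atBot (by linarith))
    intro y
    obtain ⟨x, hx⟩ := hs2 (s * y)
    refine ⟨x, ?_⟩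
    have : (s * s : ℝ) * F x = s * s * y := by simp only at hx; rw [mul_assoc, hx]; ring
    rw [hsR] at this; linarith
  have hsd0 : 0 < s * d := by
    have h1 := hmono 0 1 zero_le_one
    have h2 := hdeg 0
    rw [zero_add] at h2
    rw [h2] at h1
    have : (0:ℝ) < s * d := by linarith
    exact_mod_cast this
  let E := Equiv.ofBijective F ⟨hinj, hsurj⟩
  have hFG : ∀ x, F (E.symm x) = x := fun x => E.apply_symm_apply x
  have hGlip : ∀ x y, |E.symm x - E.symm y| ≤ |x - y| / Λ := by
    intro x y
    rw [le_div_iff₀ (by linarith)]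
    have := hlip (E.symm x) (E.symm y)
    rw [hFG, hFG] at this
    linarith
  have hGcont : Continuous E.symm := by
    apply (LipschitzWith.of_dist_le_mul (K := 1) _).continuous
    intro x y
    rw [Real.dist_eq, Real.dist_eq]
    refine (hGlip x y).trans ?_
    simpa using div_le_self (abs_nonneg (x - y)) hΛ.le
  refine ⟨s, (s * d).toNat, E.symm, hs, Int.toNat_of_nonneg hsd0.le, by omega, hsd,
    fun x => E.symm_apply_apply x, hFG, hGlip, fun x => ?_⟩
  exact HasDerivAt.of_local_left_inverse hGcont.continuousAt (hdiff _).hasDerivAt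
    (abs_pos.1 (hpos _)) (Filter.Eventually.of_forall hFG)

lemma lb_bij (F : ℝ → ℝ) (d : ℤ) (hdeg : ∀ x : ℝ, F (x + 1) = F x + d)
    (T : UnitAddCircle → UnitAddCircle)
    (hT : ∀ x : ℝ, T (x : UnitAddCircle) = ((F x : ℝ) : UnitAddCircle))
    (s : ℤ) (N : ℕ) (G : ℝ → ℝ) (hs : s * s = 1) (hN : (N : ℤ) = s * d) (hN0 : 0 < N)
    (hGF : ∀ x, G (F x) = x) (hFG : ∀ x, F (G x) = x) (e x : ℝ) :
    Set.BijOn (fun k : ℕ => ((G (x - e + k) : ℝ) : UnitAddCircle)) (Finset.range N : Set ℕ)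
      {y : UnitAddCircle | T y + (e : UnitAddCircle) = (x : UnitAddCircle)} := by
  refine ⟨?_, ?_, ?_⟩
  · intro k _
    change T _ + _ = _
    rw [hT, hFG, ← AddCircle.coe_add, lb_coe_eq]
    exact ⟨k, by push_cast; ring⟩
  · intro k hk j hj hkj
    simp only [Finset.coe_range, Set.mem_Iio] at hk hj
    obtain ⟨m, hm⟩ := (lb_coe_eq _ _).1 hkj
    have h := congrArg F hm
    rw [lb_int_deg F d hdeg, hFG, hFG] at h
    have h2 : (k : ℝ) = j + m * d := by linarith
    have h3 : (k : ℤ) = j + m * d := by exact_mod_cast h2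
    have h4 : (k : ℤ) = j + (m * s) * N := by rw [hN, h3]; linear_combination (- m * d) * hs
    have h5 : (k : ℤ) % N = j % N := by rw [h4]; simp
    rw [Int.emod_eq_of_lt (by omega) (by omega), Int.emod_eq_of_lt (by omega) (by omega)] at h5
    exact_mod_cast h5
  · intro y hy
    obtain ⟨t, rfl⟩ := QuotientAddGroup.mk_surjective y
    change T (t : UnitAddCircle) + (e : UnitAddCircle) = x at hy
    rw [hT, ← AddCircle.coe_add, lb_coe_eq] at hy
    obtain ⟨m, hm⟩ := hy
    have hNz : (0 : ℤ) < N := by exact_mod_cast hN0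
    have hk0 := Int.emod_nonneg m hNz.ne'
    have hk1 := Int.emod_lt_of_pos m hNz
    have hdm := Int.emod_add_mul_ediv m N
    obtain ⟨k, hk⟩ := Int.eq_ofNat_of_zero_le hk0
    rw [hk] at hk1 hdm
    refine ⟨k, by simp; omega, ?_⟩
    change ((G (x - e + k) : ℝ) : UnitAddCircle) = (t : UnitAddCircle)
    rw [lb_coe_eq]
    refine ⟨-(s * (m / N)), ?_⟩
    have h1 := lb_int_deg F d hdeg (-(s * (m / N))) t
    have h2 : F t = x - e + m := by linarith
    have h3 : ((-(s * (m / N)) : ℤ) : ℝ) * d = k - m := by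
      have : (-(s * (m / N))) * d = k - m := by
        linear_combination (m / (N:ℤ)) * hN - hdm
      exact_mod_cast this
    rw [h2, h3, show x - e + m + (k - m) = x - e + k by ring] at h1
    rw [← h1, hGF]

lemma lb_step (F : ℝ → ℝ) (hF : ContDiff ℝ 2 F)
    (d : ℤ) (hdeg : ∀ x : ℝ, F (x + 1) = F x + d)
    (Λ : ℝ) (hΛ : 1 < Λ) (hexp : ∀ x : ℝ, Λ ≤ |deriv F x|)
    (C₁ : ℝ) (hdist : ∀ x : ℝ, |deriv (deriv F) x| ≤ C₁ * |deriv F x|) (hC : 0 ≤ C₁)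
    (T : UnitAddCircle → UnitAddCircle)
    (hT : ∀ x : ℝ, T (x : UnitAddCircle) = ((F x : ℝ) : UnitAddCircle))
    (e : ℝ) (f : UnitAddCircle → ℝ) (hf : LBInv (C₁ / (Λ - 1)) f) :
    LBInv (C₁ / (Λ - 1)) (fun x => ∑ᶠ y ∈ {y : UnitAddCircle | T y + (e : UnitAddCircle) = x},
        f y / |circleDeriv F y|) := by
  obtain ⟨s, N, G, hs, hN, hN0, hsd, hGF, hFG, hGlip, hGd⟩ := lb_inverse F hF d hdeg Λ hΛ hexp
  have hpos : ∀ x, 0 < |deriv F x| := fun x => by linarith [hexp x]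
  have hsR : (s : ℝ) * s = 1 := by exact_mod_cast hs
  have key : ∀ x : ℝ, (∑ᶠ y ∈ {y : UnitAddCircle | T y + (e : UnitAddCircle) = (x : UnitAddCircle)},
        f y / |circleDeriv F y|) =
        ∑ k ∈ Finset.range N, f (G (x - e + k) : ℝ) / |deriv F (G (x - e + k))| := by
    intro x
    rw [← finsum_mem_coe_finset]
    refine (finsum_mem_eq_of_bijOn _
      (lb_bij F d hdeg T hT s N G hs hN hN0 hGF hFG e x) ?_).symm
    intro k _
    rw [lb_circleDeriv F d hdeg]
  obtain ⟨H, h1, h2, h3, h4⟩ := hf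
  refine ⟨fun x => ∑ k ∈ Finset.range N, s * H (G (x - e + k)), ?_, ?_, ?_, ?_⟩
  · intro x
    simp only [key]
    refine HasDerivAt.fun_sum fun k _ => ?_
    have hw : HasDerivAt (fun x : ℝ => x - e + k) 1 x := ((hasDerivAt_id x).sub_const e).add_const _
    have hg := (hGd (x - e + k)).comp x hw
    have hh := ((h1 (G (x - e + k))).comp x hg).const_mul (s : ℝ)
    refine HasDerivAt.congr_deriv hh ?_
    rw [hsd]
    have := abs_pos.1 (hpos (G (x - e + k)))
    have hs0 : (s : ℝ) ≠ 0 := by intro h; simp [h] at hsR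
    field_simp
    linear_combination (f (G (x - e + k) : ℝ)) * hsR
  · intro x
    have hGs : G (x - e + N) = G (x - e) + s := by
      have h := lb_int_deg F d hdeg s (G (x - e))
      rw [hFG] at h
      have hNR : (N : ℝ) = s * d := by exact_mod_cast hN
      rw [hNR, ← h, hGF]
    have hH := lb_int_deg H 1 (by simpa using h2) s (G (x - e))
    have ht := Finset.sum_range_sub (fun k : ℕ => s * H (G (x - e + k))) N
    simp only [hGs, hH, Finset.sum_sub_distrib] at ht
    have hr : ∑ k ∈ Finset.range N, s * H (G (x + 1 - e + k)) =
        ∑ k ∈ Finset.range N, s * H (G (x - e + (k + 1 : ℕ))) := by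
      refine Finset.sum_congr rfl fun k _ => ?_
      congr 3; push_cast; ring
    simp only [hr]
    push_cast at ht ⊢
    simp only [add_zero] at ht
    linear_combination ht + hsR
  · intro x
    simp only [key]
    exact Finset.sum_pos (fun k _ => div_pos (h3 _) (hpos _)) ⟨0, by simpa using hN0⟩
  · intro x y
    simp only [key, Finset.mul_sum]
    refine Finset.sum_le_sum fun k _ => ?_
    set a := G (x - e + k)
    set b := G (y - e + k)
    have hab : |a - b| ≤ |x - y| / Λ := by
      have := hGlip (x - e + k) (y - e + k)
      rwa [show x - e + k - (y - e + k) = x - y by ring] at this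
    have hd := lb_dist F hF Λ hΛ hexp C₁ hdist b a
    have hL : 0 ≤ C₁ / (Λ - 1) := div_nonneg hC (by linarith)
    have hE : Real.exp (C₁ / (Λ - 1) * |a - b|) * Real.exp (C₁ * |b - a|) ≤
        Real.exp (C₁ / (Λ - 1) * |x - y|) := by
      rw [← Real.exp_add, abs_sub_comm b a]
      apply Real.exp_le_exp.2
      calc _ = (C₁ / (Λ - 1) + C₁) * |a - b| := by ring
        _ ≤ (C₁ / (Λ - 1) + C₁) * (|x - y| / Λ) := by gcongr
        _ = _ := by
          have : Λ - 1 ≠ 0 := by linarith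
          have : Λ ≠ 0 := by linarith
          field_simp
          ring
    rw [← mul_div_assoc, div_le_div_iff₀ (hpos a) (hpos b)]
    calc f a * |deriv F b| ≤ (Real.exp (C₁ / (Λ - 1) * |a - b|) * f b) *
          (Real.exp (C₁ * |b - a|) * |deriv F a|) :=
          mul_le_mul (h4 a b) hd (abs_nonneg _) (mul_nonneg (Real.exp_pos _).le (h3 b).le)
      _ = (Real.exp (C₁ / (Λ - 1) * |a - b|) * Real.exp (C₁ * |b - a|)) * (f b * |deriv F a|) := by
          ring
      _ ≤ Real.exp (C₁ / (Λ - 1) * |x - y|) * (f b * |deriv F a|) := by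
          have := (h3 b).le
          gcongr
      _ = _ := by ring

/-- Uniform lower bound (LB) for concatenations of transfer operators of
additively perturbed expanding circle maps: if `T` is a `C²` expanding circle map with lift
`F` (`|F'| ≥ Λ > 1`, `|F''/F'| ≤ C₁`, every branch of `T` mapping onto the whole circle),
`T_ε = T + ε`, and `P_ε` is the transfer operator with respect to Haar measure, given by
`(P_ε f)(x) = ∑_{y : T_ε y = x} f(y)/|DT_ε(y)|`, then for all `n`, all
`ε_1, …, ε_n ∈ (−1,1)` and all `x`: `(P_{ε_n}∘⋯∘P_{ε_1})1(x) ≥ exp(−C₁/(Λ−1))`. -/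
theorem perturbed_circle_LB
    (F : ℝ → ℝ) (hF : ContDiff ℝ 2 F)
    (d : ℤ) (hdeg : ∀ x : ℝ, F (x + 1) = F x + d)
    (Λ : ℝ) (hΛ : 1 < Λ) (hexp : ∀ x : ℝ, Λ ≤ |deriv F x|)
    (C₁ : ℝ) (hdist : ∀ x : ℝ, |deriv (deriv F) x| ≤ C₁ * |deriv F x|)
    (T : UnitAddCircle → UnitAddCircle) (hT : ∀ x : ℝ, T (x : UnitAddCircle) = ((F x : ℝ) : UnitAddCircle))
    (hfin : ∀ (e : ℝ) (x : UnitAddCircle), {y : UnitAddCircle | T y + (e : UnitAddCircle) = x}.Finite)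
    (Pop : ℝ → (UnitAddCircle → ℝ) → (UnitAddCircle → ℝ))
    (hP : ∀ (e : ℝ) (f : UnitAddCircle → ℝ) (x : UnitAddCircle),
      Pop e f x = ∑ᶠ y ∈ {y : UnitAddCircle | T y + (e : UnitAddCircle) = x},
        f y / |circleDeriv F y|) :
    ∀ (n : ℕ) (ε : ℕ → ℝ), (∀ k, ε k ∈ Set.Ioo (-1 : ℝ) 1) →
      ∀ x : UnitAddCircle,
        Real.exp (-(C₁ / (Λ - 1)))
          ≤ opComp (fun k => Pop (ε k)) n (fun _ => (1 : ℝ)) x := by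
  intro n ε _ x
  have hC : 0 ≤ C₁ := by
    have h1 := (abs_nonneg _).trans (hdist 0)
    have h2 := hexp 0
    by_contra h
    push Not at h
    nlinarith
  have hL : 0 ≤ C₁ / (Λ - 1) := div_nonneg hC (by linarith)
  refine lb_final _ hL _ ?_ x
  induction n with
  | zero =>
    refine ⟨fun x => x, fun x => hasDerivAt_id x, fun x => rfl, fun x => one_pos, fun x y => ?_⟩
    have : 1 ≤ Real.exp (C₁ / (Λ - 1) * |x - y|) := Real.one_le_exp (by positivity)
    simpa [opComp] using this
  | succ n ih =>
    have h := lb_step F hF d hdeg Λ hΛ hexp C₁ hdist hC T hT (ε (n + 1)) _ ih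
    have e : opComp (fun k => Pop (ε k)) (n + 1) (fun _ => (1 : ℝ)) = _ :=
      funext (hP (ε (n + 1)) (opComp (fun k => Pop (ε k)) n (fun _ => (1 : ℝ))))
    rw [e]
    exact h
end

section
/- Let T be a C² expanding map of the circle 𝕋 with inf_x |DT(x)| ≥ Λ > 1, and for ε ∈ (−1,1) let T_ε(x) = T(x) + ε (mod 1), with transfer operators P_ε with respect to Haar (Lebesgue) measure m given by (P_ε f)(x) = Σ_{y : T_ε(y)=x} f(y)/|DT_ε(y)|; assume sup_{ε∈(−1,1)} sup_x |D²T_ε(x)/DT_ε(x)| ≤ C₁ < ∞. Then there exists a constant C̃ < ∞ (depending only on T, Λ, C₁ and the number m of branches) such that for all ε₁, ε₂ ∈ (−1,1) and all f of bounded variation: ‖P_{ε₁} f − P_{ε₂} f‖_{L¹(m)} ≤ C̃ |ε₁ − ε₂| ‖f‖_BV. In particular the family satisfies the Lipschitz continuity property (Lip): d(P_{ε₁}, P_{ε₂}) ≤ C̃ |ε₁ − ε₂|, where d(P,Q) = sup{‖Pf − Qf‖_{L¹(m)} : ‖f‖_BV ≤ 1}. -/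
open MeasureTheory
open scoped BigOperators

/-- The variation of a function on the circle, computed through its periodic lift on `[0,1]`. -/
noncomputable def circleVar (f : UnitAddCircle → ℝ) : ENNReal :=
  eVariationOn (fun x : ℝ => f (x : UnitAddCircle)) (Set.Icc 0 1)

/-- The BV norm `‖f‖_BV = ‖f‖_{L¹} + Var(f)` of a function on the circle
(Haar/Lebesgue measure). -/
noncomputable def bvNormT (f : UnitAddCircle → ℝ) : ℝ :=
  (∫ x, |f x|) + (circleVar f).toReal

lemma exists_control (h : ℝ → ℝ) (A B : ℝ) (hv : eVariationOn h (Set.Icc A B) ≠ ⊤) :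
    ∃ V : ℝ → ℝ, MonotoneOn V (Set.Icc A B) ∧
      (∀ t ∈ Set.Icc A B, 0 ≤ V t ∧ V t ≤ (eVariationOn h (Set.Icc A B)).toReal) ∧
      ∀ s ∈ Set.Icc A B, ∀ t ∈ Set.Icc A B, s ≤ t → |h s - h t| ≤ V t - V s := by
  have hfin : ∀ t ∈ Set.Icc A B, eVariationOn h (Set.Icc A t) ≠ ⊤ := fun t ht =>
    ne_top_of_le_ne_top hv (eVariationOn.mono _ (Set.Icc_subset_Icc_right ht.2))
  have key : ∀ s ∈ Set.Icc A B, ∀ t ∈ Set.Icc A B, s ≤ t →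
      |h s - h t| ≤ (eVariationOn h (Set.Icc A t)).toReal
        - (eVariationOn h (Set.Icc A s)).toReal := by
    intro s hs t ht hst
    have h1 := eVariationOn.Icc_add_Icc h (s := Set.univ) hs.1 hst (Set.mem_univ s)
    simp only [Set.univ_inter] at h1
    have h2 : edist (h s) (h t) ≤ eVariationOn h (Set.Icc s t) :=
      eVariationOn.edist_le h (Set.left_mem_Icc.2 hst) (Set.right_mem_Icc.2 hst)
    have h3 : eVariationOn h (Set.Icc s t) ≠ ⊤ :=
      ne_top_of_le_ne_top hv (eVariationOn.mono _ (Set.Icc_subset_Icc hs.1 ht.2))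
    rw [← h1, ENNReal.toReal_add (hfin s hs) h3]
    have h4 := ENNReal.toReal_mono h3 h2
    rw [edist_dist, ENNReal.toReal_ofReal dist_nonneg, Real.dist_eq] at h4
    linarith
  refine ⟨fun t => (eVariationOn h (Set.Icc A t)).toReal, ?_, ?_, key⟩
  · intro s hs t ht hst
    have := key s hs t ht hst
    have h0 := abs_nonneg (h s - h t)
    simp only
    linarith
  · intro t ht
    exact ⟨ENNReal.toReal_nonneg, ENNReal.toReal_mono hv
      (eVariationOn.mono _ (Set.Icc_subset_Icc_right ht.2))⟩

lemma control_integral (V : ℝ → ℝ) (A B M : ℝ) (hV : MonotoneOn V (Set.Icc A B))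
    (hb : ∀ t ∈ Set.Icc A B, 0 ≤ V t ∧ V t ≤ M)
    (a b : ℝ) (hab : a ≤ b) (ha : A ≤ a) (hbB : b + 1 ≤ B) :
    IntervalIntegrable (fun t => V (t + b) - V (t + a)) volume 0 1 ∧
    ∫ t in (0:ℝ)..1, (V (t + b) - V (t + a)) ≤ (b - a) * M := by
  have hint : ∀ p q : ℝ, p ∈ Set.Icc A B → q ∈ Set.Icc A B → IntervalIntegrable V volume p q := by
    intro p q hp hq
    exact (hV.mono (Set.uIcc_subset_Icc hp hq)).intervalIntegrable
  have ma : a ∈ Set.Icc A B := ⟨ha, by linarith⟩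
  have mb : b ∈ Set.Icc A B := ⟨by linarith, by linarith⟩
  have ma1 : a + 1 ∈ Set.Icc A B := ⟨by linarith, by linarith⟩
  have mb1 : b + 1 ∈ Set.Icc A B := ⟨by linarith, by linarith⟩
  have i1 : IntervalIntegrable (fun t => V (t + b)) volume 0 1 := by
    have := (hint b (b+1) mb mb1).comp_add_right b
    simpa using this
  have i2 : IntervalIntegrable (fun t => V (t + a)) volume 0 1 := by
    have := (hint a (a+1) ma ma1).comp_add_right a
    simpa using this
  refine ⟨i1.sub i2, ?_⟩
  rw [intervalIntegral.integral_sub i1 i2, intervalIntegral.integral_comp_add_right (f := V),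
    intervalIntegral.integral_comp_add_right (f := V)]
  simp only [zero_add]
  have e1 := intervalIntegral.integral_add_adjacent_intervals (hint a b ma mb) (hint b (b+1) mb mb1)
  have e2 := intervalIntegral.integral_add_adjacent_intervals (hint a (a+1) ma ma1)
    (hint (a+1) (b+1) ma1 mb1)
  have e3 : 0 ≤ ∫ t in a..b, V t :=
    intervalIntegral.integral_nonneg hab fun t ht => (hb t ⟨by linarith [ht.1], by linarith [ht.2]⟩).1
  have e4 : ∫ t in (a+1)..(b+1), V t ≤ ∫ t in (a+1)..(b+1), M :=
    intervalIntegral.integral_mono_on (by linarith) (hint _ _ ma1 mb1) (by simp)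
      fun t ht => (hb t ⟨by linarith [ht.1], by linarith [ht.2]⟩).2
  rw [intervalIntegral.integral_const, smul_eq_mul] at e4
  rw [add_comm 1 b, add_comm 1 a]
  have : (b + 1 - (a + 1)) * M = (b - a) * M := by ring
  linarith

lemma evar_le_add (q f l : ℝ → ℝ) (s : Set ℝ)
    (h : ∀ x y, edist (q x) (q y) ≤ edist (f x) (f y) + edist (l x) (l y)) :
    eVariationOn q s ≤ eVariationOn f s + eVariationOn l s := by
  refine iSup_le ?_
  rintro ⟨n, u, hu, us⟩
  refine le_trans (Finset.sum_le_sum fun i _ => h _ _) ?_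
  rw [Finset.sum_add_distrib]
  exact add_le_add (eVariationOn.sum_le hu us) (eVariationOn.sum_le hu us)

lemma evar_periodic (g : ℝ → ℝ) (hg : ∀ x, g (x + 1) = g x) (a : ℤ) (n : ℕ) :
    eVariationOn g (Set.Icc (a : ℝ) (a + n)) ≤ n * eVariationOn g (Set.Icc 0 1) := by
  have hp : Function.Periodic g 1 := hg
  have one : ∀ b : ℤ, eVariationOn g (Set.Icc (b : ℝ) (b + 1)) ≤ eVariationOn g (Set.Icc 0 1) := by
    intro b
    have h1 := eVariationOn.comp_le_of_monotoneOn g (s := Set.Icc 0 1) (t := Set.Icc (b : ℝ) (b+1))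
      (fun x => x - b) (fun x _ y _ hxy => by simp only; linarith)
      (fun x hx => ⟨by linarith [hx.1], by linarith [hx.2]⟩)
    refine le_trans (le_of_eq ?_) h1
    congr 1
    funext x
    have := hp.sub_int_mul_eq (x := x) b
    simp only [mul_one] at this
    simp [this]
  induction n with
  | zero => simp [eVariationOn.subsingleton]
  | succ n ih =>
    have h1 := eVariationOn.Icc_add_Icc g (s := Set.univ) (a := (a:ℝ)) (b := a + n)
      (c := a + n + 1) (by simp) (by simp) (Set.mem_univ _)
    simp only [Set.univ_inter] at h1
    push_cast
    rw [← add_assoc, ← h1, add_mul, one_mul]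
    refine add_le_add ih ?_
    have := one (a + n)
    push_cast at this
    exact this

lemma sup_le_bv (f : UnitAddCircle → ℝ) (hf : Measurable f) (hv : circleVar f ≠ ⊤)
    (x : UnitAddCircle) : |f x| ≤ bvNormT f := by
  have key : ∀ x y : UnitAddCircle, |f x - f y| ≤ (circleVar f).toReal := by
    intro x y
    haveI : Fact ((0 : ℝ) < 1) := ⟨one_pos⟩
    have rep : ∀ z : UnitAddCircle, ∃ t ∈ Set.Icc (0:ℝ) 1, (t : UnitAddCircle) = z := by
      intro z
      have := (AddCircle.equivIco 1 0 z).2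
      refine ⟨(AddCircle.equivIco (1:ℝ) 0 z : ℝ), ⟨this.1, by have := this.2; linarith⟩, ?_⟩
      exact AddCircle.coe_equivIco
    obtain ⟨s, hs, rfl⟩ := rep x
    obtain ⟨t, ht, rfl⟩ := rep y
    have h2 := eVariationOn.edist_le (fun x : ℝ => f (x : UnitAddCircle)) hs ht
    have h4 := ENNReal.toReal_mono hv h2
    rw [edist_dist, ENNReal.toReal_ofReal dist_nonneg, Real.dist_eq] at h4
    exact h4
  have hint : Integrable (fun y => |f y|) := by
    refine Integrable.of_bound (C := |f x| + (circleVar f).toReal)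
      hf.abs.aestronglyMeasurable (Filter.Eventually.of_forall fun y => ?_)
    have := key x y
    have h3 := abs_sub_abs_le_abs_sub (f y) (f x)
    rw [abs_sub_comm] at h3
    simp only [Real.norm_eq_abs, abs_abs]
    linarith
  have h1 : ∫ y : UnitAddCircle, (|f x| - (circleVar f).toReal) ≤ ∫ y, |f y| := by
    refine integral_mono (integrable_const _) hint fun y => ?_
    have := key x y
    have h3 := abs_sub_abs_le_abs_sub (f x) (f y)
    simp only
    linarith
  rw [integral_const] at h1
  have hu : volume.real (Set.univ : Set UnitAddCircle) = 1 := by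
    simp [Measure.real, UnitAddCircle.measure_univ]
  rw [hu, one_smul] at h1
  unfold bvNormT
  linarith

lemma antilip (F : ℝ → ℝ) (hF : Differentiable ℝ F) (Λ : ℝ) (hΛ : 1 < Λ)
    (hexp : ∀ x : ℝ, Λ ≤ |deriv F x|) (x y : ℝ) : |x - y| ≤ |F x - F y| := by
  wlog hxy : x < y generalizing x y
  · rcases (not_lt.1 hxy).eq_or_lt with h | h
    · simp [h]
    · rw [abs_sub_comm, abs_sub_comm (F x)]
      exact this y x h
  obtain ⟨c, _, hc⟩ := exists_deriv_eq_slope F hxy hF.continuous.continuousOn hF.differentiableOn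
  have h1 := hexp c
  have h2 : 0 < y - x := by linarith
  rw [hc, abs_div, abs_of_pos h2, le_div_iff₀ h2] at h1
  rw [abs_sub_comm, abs_sub_comm (F x), abs_of_pos h2]
  nlinarith

/-- Lipschitz continuity (Lip) of the transfer operators of additively
perturbed expanding circle maps: there is `C̃ < ∞` such that for all `ε₁, ε₂ ∈ (−1,1)` and
every `f` of bounded variation, `‖P_{ε₁}f − P_{ε₂}f‖_{L¹} ≤ C̃ |ε₁−ε₂| ‖f‖_BV`; in particular
`d(P_{ε₁}, P_{ε₂}) ≤ C̃ |ε₁ − ε₂|`. -/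
theorem perturbed_circle_Lip
    (F : ℝ → ℝ) (hF : ContDiff ℝ 2 F)
    (d : ℤ) (hdeg : ∀ x : ℝ, F (x + 1) = F x + d)
    (Λ : ℝ) (hΛ : 1 < Λ) (hexp : ∀ x : ℝ, Λ ≤ |deriv F x|)
    (C₁ : ℝ) (hdist : ∀ x : ℝ, |deriv (deriv F) x| ≤ C₁ * |deriv F x|)
    (T : UnitAddCircle → UnitAddCircle)
    (hT : ∀ x : ℝ, T (x : UnitAddCircle) = ((F x : ℝ) : UnitAddCircle))
    (hfin : ∀ (e : ℝ) (x : UnitAddCircle),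
      {y : UnitAddCircle | T y + (e : UnitAddCircle) = x}.Finite)
    (Pop : ℝ → (UnitAddCircle → ℝ) → (UnitAddCircle → ℝ))
    (hP : ∀ (e : ℝ) (f : UnitAddCircle → ℝ) (x : UnitAddCircle),
      Pop e f x = ∑ᶠ y ∈ {y : UnitAddCircle | T y + (e : UnitAddCircle) = x},
        f y / |circleDeriv F y|) :
    ∃ C' : ℝ, ∀ ε₁ ε₂ : ℝ, ε₁ ∈ Set.Ioo (-1 : ℝ) 1 → ε₂ ∈ Set.Ioo (-1 : ℝ) 1 →
      ∀ f : UnitAddCircle → ℝ, Measurable f → circleVar f ≠ ⊤ →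
        (∫ x, |Pop ε₁ f x - Pop ε₂ f x|) ≤ C' * |ε₁ - ε₂| * bvNormT f := by
  have hFd : Differentiable ℝ F := hF.differentiable (by norm_num)
  have hdF : Differentiable ℝ (deriv F) := by
    have : ContDiff ℝ 1 (deriv F) := by
      have h2 : ContDiff ℝ (1 + 1) F := by simpa [one_add_one_eq_two] using hF
      exact (contDiff_succ_iff_deriv.1 h2).2.2
    exact this.differentiable (by norm_num)
  have hal := antilip F hFd Λ hΛ hexp
  have hinj : Function.Injective F := by
    intro x y hxy
    have := hal x y
    rw [hxy, sub_self, abs_zero] at this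
    exact sub_eq_zero.1 (abs_eq_zero.1 (le_antisymm this (abs_nonneg _)))
  have hd0 : d ≠ 0 := by
    rintro rfl
    have := hdeg 0
    simp at this
    exact one_ne_zero (hinj this)
  -- integer translations
  have hdegN : ∀ (n : ℕ) (x : ℝ), F (x + n) = F x + n * d := by
    intro n
    induction n with
    | zero => simp
    | succ n ih => intro x; push_cast; rw [← add_assoc, hdeg, ih]; ring
  have hdegZ : ∀ (n : ℤ) (x : ℝ), F (x + n) = F x + n * d := by
    intro n x
    obtain ⟨m, rfl | rfl⟩ := n.eq_nat_or_neg
    · simpa using hdegN m x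
    · have := hdegN m (x + ((-(m:ℤ) : ℤ) : ℝ))
      push_cast at this ⊢
      rw [neg_add_cancel_right] at this
      linarith
  have hsurj : Function.Surjective F := by
    intro t
    obtain ⟨m, hm⟩ := exists_nat_ge |t - F 0|
    have hm1 := abs_le.1 hm
    have hdd : (1 : ℝ) ≤ (d : ℝ) * d := by
      have : (1 : ℤ) ≤ d * d := by
        have := mul_self_pos.2 hd0
        omega
      exact_mod_cast this
    have hm0 : (0 : ℝ) ≤ m := Nat.cast_nonneg m
    have hmd : (m : ℝ) ≤ m * (d * d) := by nlinarith
    refine mem_range_of_exists_le_of_exists_ge hFd.continuous ⟨((-(d * m) : ℤ) : ℝ), ?_⟩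
      ⟨((d * m : ℤ) : ℝ), ?_⟩
    · have := hdegZ (-(d * m)) 0
      rw [zero_add] at this
      rw [this]; push_cast; nlinarith [hm1.1]
    · have := hdegZ (d * m) 0
      rw [zero_add] at this
      rw [this]; push_cast; nlinarith [hm1.2]
  obtain ⟨G, hG⟩ := hsurj.hasRightInverse
  have hGF : ∀ x, G (F x) = x := fun x => hinj (hG _)
  have hGl : ∀ x y, |G x - G y| ≤ |x - y| := by
    intro x y
    have := hal (G x) (G y)
    rwa [hG, hG] at this
  have hGm : Monotone G ∨ Antitone G := by
    rcases hFd.continuous.strictMono_of_inj hinj with h | h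
    · left; intro x y hxy
      exact h.le_iff_le.1 (by rw [hG, hG]; exact hxy)
    · right; intro x y hxy
      exact h.le_iff_ge.1 (by rw [hG, hG]; exact hxy)
  -- periodicity of the derivative
  have hper : Function.Periodic (deriv F) 1 := by
    intro x
    have h1 : (fun y => F (y + 1)) = fun y => F y + d := funext hdeg
    have h2 := congrArg (fun g => deriv g x) h1
    simp only [deriv_comp_add_const, deriv_add_const] at h2
    exact h2
  have hcd : ∀ y : ℝ, circleDeriv F (y : UnitAddCircle) = deriv F y := by
    intro y
    unfold circleDeriv
    rw [AddCircle.coe_equivIco_mk_apply]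
    have := hper.sub_int_mul_eq (x := y) ⌊y⌋
    simp only [mul_one] at this
    simp only [div_one, mul_one]
    rw [← Int.self_sub_floor]
    exact this
  have hC1 : 0 ≤ C₁ := by
    have h1 := hdist 0
    have h2 := hexp 0
    have h3 := abs_nonneg (deriv (deriv F) 0)
    by_contra h
    push Not at h
    nlinarith
  have hne : ∀ x, deriv F x ≠ 0 := fun x h => by
    have := hexp x
    rw [h, abs_zero] at this
    linarith
  -- Lipschitz weight
  have hv : ∀ x y, |(deriv F x)⁻¹ - (deriv F y)⁻¹| ≤ C₁ * |x - y| := by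
    intro x y
    have := Convex.norm_image_sub_le_of_norm_deriv_le (𝕜 := ℝ) (f := fun x => (deriv F x)⁻¹)
      (s := Set.univ) (C := C₁) (x := y) (y := x)
      (fun z _ => (hdF z).inv (hne z)) (fun z _ => by
        have : deriv (fun x => (deriv F x)⁻¹) z = - deriv (deriv F) z / (deriv F z) ^ 2 :=
          ((hdF z).hasDerivAt.inv (hne z)).deriv
        rw [this, Real.norm_eq_abs, abs_div, abs_neg, abs_pow]
        have h1 := hdist z
        have h2 := hexp z
        rw [div_le_iff₀ (pow_pos (abs_pos.2 (hne z)) 2)]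
        nlinarith [mul_nonneg hC1 (abs_nonneg (deriv F z)), mul_nonneg (mul_nonneg hC1 (abs_nonneg (deriv F z))) (by linarith : 0 ≤ |deriv F z| - 1)])
      convex_univ (Set.mem_univ _) (Set.mem_univ _)
    simpa only [Real.norm_eq_abs] using this
  set D : ℕ := d.natAbs with hD
  obtain ⟨R, hR⟩ := exists_nat_ge (|G 0| + D + 1)
  -- formula for the transfer operator
  have hPop : ∀ (e : ℝ) (f : UnitAddCircle → ℝ) (t : ℝ), Pop e f (t : UnitAddCircle)
      = ∑ k ∈ Finset.range D, f (G (t - e + k) : ℝ) * |(deriv F (G (t - e + k)))⁻¹| := by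
    intro e f t
    rw [hP]
    have hset : {y : UnitAddCircle | T y + (e : UnitAddCircle) = (t : UnitAddCircle)}
        = (fun k : ℕ => ((G (t - e + k) : ℝ) : UnitAddCircle)) '' (Finset.range D : Set ℕ) := by
      ext y
      induction y using QuotientAddGroup.induction_on with
      | H y =>
      simp only [Set.mem_setOf_eq, Set.mem_image, Finset.coe_range, Set.mem_Iio]
      constructor
      · intro h
        have h' : ((F y + e - t : ℝ) : UnitAddCircle) = 0 := by
          rw [AddCircle.coe_sub, AddCircle.coe_add, ← hT, sub_eq_zero]
          exact h
        obtain ⟨n, hn⟩ := (AddCircle.coe_eq_zero_iff (1:ℝ)).1 h'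
        have hn' : (n : ℝ) = F y + e - t := by simpa using hn
        refine ⟨(n % d).toNat, ?_, ?_⟩
        · have h1 := Int.emod_nonneg n hd0
          have h2 := Int.emod_lt n hd0
          omega
        · have h1 := Int.emod_nonneg n hd0
          have h2 : (((n % d).toNat : ℕ) : ℝ) = ((n % d : ℤ) : ℝ) := by
            exact_mod_cast Int.toNat_of_nonneg h1
          have h3 : (n : ℝ) = ((n % d : ℤ) : ℝ) + d * ((n / d : ℤ) : ℝ) := by
            exact_mod_cast (Int.emod_add_mul_ediv n d).symm
          have h4 : F (y + ((-(n / d) : ℤ) : ℝ)) = t - e + (((n % d).toNat : ℕ) : ℝ) := by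
            rw [hdegZ, h2]; push_cast; linarith
          rw [← h4, hGF]
          change ((y + ((-(n / d) : ℤ) : ℝ) : ℝ) : UnitAddCircle) = (y : UnitAddCircle)
          rw [← sub_eq_zero, ← AddCircle.coe_sub, AddCircle.coe_eq_zero_iff]
          exact ⟨-(n / d), by simp⟩
      · rintro ⟨k, hk, hy⟩
        have hy' : (y : UnitAddCircle) = ((G (t - e + k) : ℝ) : UnitAddCircle) := hy.symm
        change T (y : UnitAddCircle) + _ = _
        rw [hy', hT, hG, ← AddCircle.coe_add, ← sub_eq_zero, ← AddCircle.coe_sub,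
          AddCircle.coe_eq_zero_iff]
        exact ⟨k, by simp; ring⟩
    have hio : Set.InjOn (fun k : ℕ => ((G (t - e + k) : ℝ) : UnitAddCircle))
        (Finset.range D : Set ℕ) := by
      intro j hj k hk hjk
      simp only [Finset.coe_range, Set.mem_Iio] at hj hk
      simp only at hjk
      rw [← sub_eq_zero, ← AddCircle.coe_sub, AddCircle.coe_eq_zero_iff] at hjk
      obtain ⟨n, hn⟩ := hjk
      have hn' : G (t - e + j) = G (t - e + k) + n := by
        have : (n : ℝ) = G (t - e + j) - G (t - e + k) := by simpa using hn
        linarith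
      have h1 := congrArg F hn'
      rw [hdegZ, hG, hG] at h1
      have h2 : (j : ℤ) - k = d * n := by
        have : ((j : ℝ)) - k = d * n := by linarith
        exact_mod_cast this
      have h3 : ((j : ℤ) - k) = 0 := by
        refine Int.eq_zero_of_abs_lt_dvd (m := d.natAbs) (Int.natAbs_dvd.2 ⟨n, h2⟩) ?_
        rw [abs_lt]
        omega
      omega
    rw [hset, finsum_mem_image hio, finsum_mem_coe_finset]
    refine Finset.sum_congr rfl fun k _ => ?_
    rw [hcd, abs_inv, div_eq_mul_inv]
  refine ⟨D * (2 * R * (1 + C₁)), ?_⟩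
  intro ε₁ ε₂ h1 h2 f hf hvar
  wlog hle : ε₂ ≤ ε₁ generalizing ε₁ ε₂
  · have := this ε₂ ε₁ h2 h1 (le_of_not_ge hle)
    rw [abs_sub_comm]
    simpa only [abs_sub_comm (Pop ε₁ f _)] using this
  have hsup := sup_le_bv f hf hvar
  set M := bvNormT f with hM
  have hM0 : 0 ≤ M := (abs_nonneg _).trans (hsup 0)
  have hVM : (circleVar f).toReal ≤ M := by
    have : 0 ≤ ∫ x, |f x| := integral_nonneg fun x => abs_nonneg _
    rw [hM]; unfold bvNormT; linarith
  let ft : ℝ → ℝ := fun x => f (x : UnitAddCircle)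
  let q : ℝ → ℝ := fun y => f (y : UnitAddCircle) * |(deriv F y)⁻¹|
  let l : ℝ → ℝ := fun y => M * C₁ * y
  let h : ℝ → ℝ := q ∘ G
  have hq : eVariationOn q (Set.Icc (-(R:ℝ)) R) ≤ ENNReal.ofReal (2 * R * (1 + C₁) * M) := by
    have e1 := evar_le_add q ft l (Set.Icc (-(R:ℝ)) R) (by
      intro x y
      rw [edist_dist, edist_dist, edist_dist, ← ENNReal.ofReal_add dist_nonneg dist_nonneg]
      refine ENNReal.ofReal_le_ofReal ?_
      simp only [Real.dist_eq, q, ft, l]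
      have a1 : f x * |(deriv F x)⁻¹| - f y * |(deriv F y)⁻¹| =
        (f x - f y) * |(deriv F x)⁻¹| + f y * (|(deriv F x)⁻¹| - |(deriv F y)⁻¹|) := by ring
      have a2 : |(deriv F x)⁻¹| ≤ 1 := by
        rw [abs_inv]
        exact inv_le_one_of_one_le₀ (by linarith [hexp x])
      have a3 : |(|(deriv F x)⁻¹| - |(deriv F y)⁻¹|)| ≤ C₁ * |x - y| :=
        (abs_abs_sub_abs_le_abs_sub _ _).trans (hv x y)
      have a4 : |M * C₁ * x - M * C₁ * y| = M * (C₁ * |x - y|) := by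
        rw [← mul_sub, abs_mul, abs_of_nonneg (mul_nonneg hM0 hC1), mul_assoc]
      rw [a1, a4]
      refine (abs_add_le _ _).trans (add_le_add ?_ ?_)
      · rw [abs_mul, abs_abs]
        exact mul_le_of_le_one_right (abs_nonneg _) a2
      · rw [abs_mul]
        exact mul_le_mul (hsup _) a3 (abs_nonneg _) hM0)
    have e2 : eVariationOn ft (Set.Icc (-(R:ℝ)) R) ≤ ENNReal.ofReal (2 * R * M) := by
      have := evar_periodic ft (fun x => by simp only [ft]; rw [AddCircle.coe_add]; congr 1; simp [AddCircle.coe_period]) (-(R:ℤ)) (2 * R)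
      have e : (((-(R:ℤ) : ℤ) : ℝ) + ((2 * R : ℕ) : ℝ)) = R := by push_cast; ring
      rw [e] at this
      push_cast at this
      refine this.trans ?_
      rw [ENNReal.ofReal_mul (by positivity)]
      have e5 : eVariationOn ft (Set.Icc 0 1) = circleVar f := rfl
      have e6 : ENNReal.ofReal (2 * R) = 2 * R := by
        rw [ENNReal.ofReal_mul (by norm_num)]; simp
      rw [e5, e6, ← ENNReal.ofReal_toReal hvar]
      gcongr
    have e3 : eVariationOn l (Set.Icc (-(R:ℝ)) R) ≤ ENNReal.ofReal (M * C₁ * (2 * R)) := by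
      have hl : MonotoneOn l Set.univ := fun x _ y _ hxy =>
        mul_le_mul_of_nonneg_left hxy (mul_nonneg hM0 hC1)
      have := hl.eVariationOn_le (Set.mem_univ (-(R:ℝ))) (Set.mem_univ (R:ℝ))
      rw [Set.univ_inter] at this
      refine this.trans (le_of_eq ?_)
      congr 1
      simp only [l]; ring
    refine e1.trans ((add_le_add e2 e3).trans (le_of_eq ?_))
    rw [← ENNReal.ofReal_add (by positivity) (by positivity)]
    congr 1; ring
  have hmaps : Set.MapsTo G (Set.Icc (-1:ℝ) (D + 1)) (Set.Icc (-(R:ℝ)) R) := by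
    intro x hx
    have a1 := hGl x 0
    rw [sub_zero] at a1
    have a2 : |x| ≤ D + 1 := abs_le.2 ⟨by have := hx.1; have : (0:ℝ) ≤ D := Nat.cast_nonneg D; linarith, hx.2⟩
    have a3 := abs_sub_abs_le_abs_sub (G x) (G 0)
    exact abs_le.1 (by linarith)
  have hh : eVariationOn h (Set.Icc (-1:ℝ) (D + 1)) ≤ ENNReal.ofReal (2 * R * (1 + C₁) * M) := by
    refine le_trans ?_ hq
    rcases hGm with hg | hg
    · exact eVariationOn.comp_le_of_monotoneOn q G (hg.monotoneOn _) hmaps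
    · exact eVariationOn.comp_le_of_antitoneOn q G (hg.antitoneOn _) hmaps
  obtain ⟨V, hVm, hVb, hVc⟩ := exists_control h (-1) (D + 1)
    (ne_top_of_le_ne_top ENNReal.ofReal_ne_top hh)
  have hK : (eVariationOn h (Set.Icc (-1:ℝ) (D + 1))).toReal ≤ 2 * R * (1 + C₁) * M :=
    ENNReal.toReal_le_of_le_ofReal (by positivity) hh
  have hVb' : ∀ t ∈ Set.Icc (-1:ℝ) (D + 1), 0 ≤ V t ∧ V t ≤ 2 * R * (1 + C₁) * M :=
    fun t ht => ⟨(hVb t ht).1, (hVb t ht).2.trans hK⟩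
  have hci : ∀ k ∈ Finset.range D, _ := fun k hk =>
    control_integral V (-1) (D + 1) _ hVm hVb' (-ε₁ + k) (-ε₂ + k) (by linarith)
      (by have := h1.2; have : (0:ℝ) ≤ k := Nat.cast_nonneg k; linarith)
      (by
        have a1 := h2.1
        have a2 : (k:ℝ) + 1 ≤ D := by exact_mod_cast Finset.mem_range.1 hk
        linarith)
  rw [← UnitAddCircle.intervalIntegral_preimage 0]
  rw [zero_add]
  have hmain : ∫ t in (0:ℝ)..1, |Pop ε₁ f t - Pop ε₂ f t| ≤
      ∫ t in (0:ℝ)..1, ∑ k ∈ Finset.range D, (V (t + (-ε₂ + k)) - V (t + (-ε₁ + k))) := by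
    rw [intervalIntegral.integral_of_le zero_le_one, intervalIntegral.integral_of_le zero_le_one]
    refine integral_mono_of_nonneg (Filter.Eventually.of_forall fun t => abs_nonneg _) ?_ ?_
    · exact integrable_finsetSum _ fun k hk =>
        (intervalIntegrable_iff_integrableOn_Ioc_of_le zero_le_one).1 (hci k hk).1
    · refine (ae_restrict_iff' measurableSet_Ioc).2 (Filter.Eventually.of_forall fun t ht => ?_)
      simp only
      rw [hPop, hPop, ← Finset.sum_sub_distrib]
      refine (Finset.abs_sum_le_sum_abs _ _).trans (Finset.sum_le_sum fun k hk => ?_)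
      have a2 : (k:ℝ) + 1 ≤ D := by exact_mod_cast Finset.mem_range.1 hk
      have a3 : (0:ℝ) ≤ k := Nat.cast_nonneg k
      have b1 := h1.1
      have b2 := h1.2
      have b3 := h2.1
      have b4 := h2.2
      have := hVc (t + (-ε₁ + k)) ⟨by linarith [ht.1], by linarith [ht.2]⟩ (t + (-ε₂ + k))
        ⟨by linarith [ht.1], by linarith [ht.2]⟩ (by linarith)
      have c1 : t - ε₁ + k = t + (-ε₁ + k) := by ring
      have c2 : t - ε₂ + k = t + (-ε₂ + k) := by ring
      rw [c1, c2]
      exact this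
  refine hmain.trans ?_
  rw [intervalIntegral.integral_finsetSum fun k hk => (hci k hk).1]
  refine (Finset.sum_le_sum fun k hk => (hci k hk).2).trans (le_of_eq ?_)
  rw [abs_of_nonneg (sub_nonneg.2 hle), Finset.sum_congr rfl (g := fun _ => (ε₁ - ε₂) * (2 * R * (1 + C₁) * M))
    (fun k _ => by ring), Finset.sum_const, Finset.card_range, nsmul_eq_mul]
  ring
end
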